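/- For all integers w, p0, p1, p2 and all nonnegative integers u, ℓ, one has G(w,u,ℓ+1;p0,p1,p2) = q^{u} G(w,u,ℓ;p0,p1,p2) − q^{u−2ℓ} G(w+1,u,ℓ;p0,p1,p2). -/

import Mathlib

open Finset

noncomputable section

/-- The field `ℚ(q)` of rational functions over `ℚ`. -/
abbrev F : Type := RatFunc ℚ

/-- The indeterminate `q`. -/
noncomputable def qq : F := RatFunc.X

/-- The quantum integer `[n]` with base `v`: `(v^n - v^(-n))/(v - v⁻¹)`. -/
noncomputable def qint (v : F) (n : ℤ) : F := (v ^ n - v ^ (-n)) / (v - v⁻¹)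

/-- The quantum factorial `[m]! = [1][2]⋯[m]` with base `v`. -/
noncomputable def qfact (v : F) (m : ℕ) : F := ∏ k ∈ range m, qint v ((k : ℤ) + 1)

/-- The quantum binomial coefficient `C_v(n,d) = [n][n-1]⋯[n-d+1]/[d]!` for `d ≥ 0`,
and `0` for `d < 0`. -/
noncomputable def qbinom (v : F) (n d : ℤ) : F :=
  if d < 0 then 0
  else (∏ k ∈ range d.toNat, qint v (n - (k : ℤ))) / qfact v d.toNat

/-- The function `G(w,u,ℓ;p0,p1,p2)` of [CLW, (5.1)]. -/
noncomputable def G (w : ℤ) (u ℓ : ℕ) (p0 p1 p2 : ℤ) : F :=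
  (-1 : F) ^ w * qq ^ ((u : ℤ) ^ 2 - w * (u : ℤ) + (ℓ : ℤ) * (u : ℤ)) *
  ((∑ c ∈ range (u + 1), ∑ e ∈ range (u + 1 - c), ∑ t ∈ range (ℓ + 1),
      (let r : ℕ := u - c - e;
       if Even ((t : ℤ) + w - (r : ℤ)) then
         qq ^ (-(t : ℤ) * ((ℓ : ℤ) + (u : ℤ) - 1) - (u : ℤ) * ((c : ℤ) + (e : ℤ)) + 2 * (c : ℤ)
               + (r : ℤ) * p0 + 2 * (c : ℤ) * p1 + 2 * (e : ℤ) * p2)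
           * qbinom qq (ℓ : ℤ) (t : ℤ) * qbinom qq (w + (t : ℤ) + p0) (r : ℤ)
           * qbinom (qq ^ 2) ((w + (t : ℤ) - (r : ℤ)) / 2 + p1) (c : ℤ)
           * qbinom (qq ^ 2) ((w + (t : ℤ) - (r : ℤ)) / 2 + p2) (e : ℤ)
       else 0))
  - (∑ c ∈ range (u + 1), ∑ e ∈ range (u + 1 - c), ∑ t ∈ range (ℓ + 1),
      (let r : ℕ := u - c - e;
       if ¬ Even ((t : ℤ) + w - (r : ℤ)) then
         qq ^ (-(t : ℤ) * ((ℓ : ℤ) + (u : ℤ) - 1) - ((u : ℤ) - 1) * ((c : ℤ) + (e : ℤ))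
               + (r : ℤ) * p0 + 2 * (c : ℤ) * p1 + 2 * (e : ℤ) * p2)
           * qbinom qq (ℓ : ℤ) (t : ℤ) * qbinom qq (w + (t : ℤ) + p0) (r : ℤ)
           * qbinom (qq ^ 2) (1 + (w + (t : ℤ) - (r : ℤ) - 1) / 2 + p1) (c : ℤ)
           * qbinom (qq ^ 2) ((w + (t : ℤ) - (r : ℤ) - 1) / 2 + p2) (e : ℤ)
       else 0)))

theorem qq_ne : qq ≠ 0 := RatFunc.X_ne_zero

theorem qq_pow_ne (n : ℕ) (hn : n ≠ 0) : qq ^ n ≠ 1 := by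
  intro h
  unfold qq at h
  rw [← RatFunc.algebraMap_X, ← map_pow, ← map_one (algebraMap (Polynomial ℚ) (RatFunc ℚ))] at h
  have h2 := RatFunc.algebraMap_injective ℚ h
  have h3 := congrArg Polynomial.natDegree h2
  simp at h3
  exact hn h3

theorem qq_sub_ne : qq - qq⁻¹ ≠ 0 := by
  intro h
  have h0 := qq_ne
  apply qq_pow_ne 2 (by norm_num)
  field_simp at h
  linear_combination h

theorem qint_ne (k : ℕ) : qint qq ((k : ℤ) + 1) ≠ 0 := by
  unfold qint
  apply div_ne_zero _ qq_sub_ne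
  intro h
  apply qq_pow_ne (2 * (k + 1)) (by omega)
  have h0 := qq_ne
  have h1 : qq ^ ((k : ℤ) + 1) = qq ^ (k + 1) := by
    rw [← zpow_natCast]; push_cast; rfl
  rw [zpow_neg, h1] at h
  have h2 : qq ^ (k + 1) ≠ 0 := pow_ne_zero _ h0
  rw [mul_comm, pow_mul]
  field_simp at h
  linear_combination h

theorem qint_add (l t : ℤ) :
    qint qq (l + 1) = qq ^ t * qint qq (l - t + 1) + qq ^ (t - l - 1) * qint qq t := by
  have h0 := qq_ne
  unfold qint
  rw [← mul_div_assoc, ← mul_div_assoc, ← add_div]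
  congr 1
  rw [mul_sub, mul_sub, ← zpow_add₀ h0, ← zpow_add₀ h0, ← zpow_add₀ h0, ← zpow_add₀ h0]
  ring_nf

theorem qbinom_zero (n : ℤ) : qbinom qq n 0 = 1 := by
  simp [qbinom, qfact]

theorem qbinom_top (l : ℕ) : qbinom qq (l : ℤ) ((l : ℤ) + 1) = 0 := by
  unfold qbinom
  rw [if_neg (by omega)]
  have : ((l : ℤ) + 1).toNat = l + 1 := by omega
  rw [this, prod_range_succ]
  simp [qint]

theorem qbinom_pascal (n : ℤ) (t : ℕ) :
    qbinom qq (n + 1) ((t : ℤ) + 1) =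
      qq ^ ((t : ℤ) + 1) * qbinom qq n ((t : ℤ) + 1) + qq ^ ((t : ℤ) - n) * qbinom qq n t := by
  unfold qbinom
  rw [if_neg (by omega), if_neg (by omega), if_neg (by omega)]
  have : ((t : ℤ) + 1).toNat = t + 1 := by omega
  have h2 : ((t : ℤ)).toNat = t := by omega
  rw [this, h2, prod_range_succ', prod_range_succ]
  have hf : qfact qq (t + 1) = qfact qq t * qint qq ((t : ℤ) + 1) := by
    unfold qfact; rw [prod_range_succ]
  have hne : qfact qq t ≠ 0 := by
    unfold qfact; exact prod_ne_zero_iff.2 fun k _ => qint_ne k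
  have h3 := qint_ne t
  have h4 := qint_add n ((t : ℤ) + 1)
  have e1 : ∀ k : ℕ, n + 1 - ((k + 1 : ℕ) : ℤ) = n - k := by intro k; push_cast; ring
  have e2 : n - ((t : ℤ) + 1) + 1 = n - t := by ring
  have e3 : (t : ℤ) + 1 - n - 1 = t - n := by ring
  rw [e2, e3] at h4
  simp only [e1, Nat.cast_zero, sub_zero]
  rw [h4, hf]
  field_simp

/-- The part of the summand that depends on `w + t` only. -/
noncomputable def Phi (u : ℕ) (p0 p1 p2 m : ℤ) : F :=
  (∑ c ∈ range (u + 1), ∑ e ∈ range (u + 1 - c),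
      (if Even (m - ((u - c - e : ℕ) : ℤ)) then
         qq ^ (- (u : ℤ) * ((c : ℤ) + (e : ℤ)) + 2 * (c : ℤ)
               + ((u - c - e : ℕ) : ℤ) * p0 + 2 * (c : ℤ) * p1 + 2 * (e : ℤ) * p2)
           * qbinom qq (m + p0) ((u - c - e : ℕ) : ℤ)
           * qbinom (qq ^ 2) ((m - ((u - c - e : ℕ) : ℤ)) / 2 + p1) (c : ℤ)
           * qbinom (qq ^ 2) ((m - ((u - c - e : ℕ) : ℤ)) / 2 + p2) (e : ℤ)
       else 0))
  - (∑ c ∈ range (u + 1), ∑ e ∈ range (u + 1 - c),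
      (if ¬ Even (m - ((u - c - e : ℕ) : ℤ)) then
         qq ^ (- ((u : ℤ) - 1) * ((c : ℤ) + (e : ℤ))
               + ((u - c - e : ℕ) : ℤ) * p0 + 2 * (c : ℤ) * p1 + 2 * (e : ℤ) * p2)
           * qbinom qq (m + p0) ((u - c - e : ℕ) : ℤ)
           * qbinom (qq ^ 2) (1 + (m - ((u - c - e : ℕ) : ℤ) - 1) / 2 + p1) (c : ℤ)
           * qbinom (qq ^ 2) ((m - ((u - c - e : ℕ) : ℤ) - 1) / 2 + p2) (e : ℤ)
       else 0))

theorem sum_swap3 (u l : ℕ) (f : ℕ → ℕ → ℕ → F) :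
    (∑ c ∈ range (u + 1), ∑ e ∈ range (u + 1 - c), ∑ t ∈ range (l + 1), f c e t)
      = ∑ t ∈ range (l + 1), ∑ c ∈ range (u + 1), ∑ e ∈ range (u + 1 - c), f c e t := by
  rw [sum_comm]
  refine sum_congr rfl fun c _ => ?_
  rw [sum_comm]

theorem G_eq (w : ℤ) (u l : ℕ) (p0 p1 p2 : ℤ) :
    G w u l p0 p1 p2 = (-1 : F) ^ w * qq ^ ((u : ℤ) ^ 2 - w * (u : ℤ) + (l : ℤ) * (u : ℤ)) *
      ∑ t ∈ range (l + 1), qq ^ (-(t : ℤ) * ((l : ℤ) + (u : ℤ) - 1)) * qbinom qq (l : ℤ) (t : ℤ)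
        * Phi u p0 p1 p2 (w + t) := by
  have h0 := qq_ne
  unfold G
  congr 1
  rw [sum_swap3, sum_swap3, ← sum_sub_distrib]
  refine sum_congr rfl fun t _ => ?_
  unfold Phi
  rw [mul_sub (_ : F) _ _, mul_sum, mul_sum]
  congr 1
  · refine sum_congr rfl fun c _ => ?_
    rw [mul_sum]
    refine sum_congr rfl fun e _ => ?_
    simp only [add_comm (t : ℤ) w]
    split_ifs with h
    · have : ∀ a b c d e f g h : ℤ, qq ^ (a - b * c + d + e + f + g) =
        qq ^ a * qq ^ (-b * c + d + e + f + g) := by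
        intros; rw [← zpow_add₀ h0]; ring_nf
      rw [this _ _ _ _ _ _ _ 0]
      ring
    · simp
  · refine sum_congr rfl fun c _ => ?_
    rw [mul_sum]
    refine sum_congr rfl fun e _ => ?_
    simp only [add_comm (t : ℤ) w]
    split_ifs with h
    · simp
    · have : ∀ a b c e f g : ℤ, qq ^ (a - b * c + e + f + g) =
        qq ^ a * qq ^ (-b * c + e + f + g) := by
        intros; rw [← zpow_add₀ h0]; ring_nf
      rw [this]
      ring

theorem S_rec (u l : ℕ) (w : ℤ) (P : ℤ → F) :
    (∑ t ∈ range (l + 1 + 1), qq ^ (-(t : ℤ) * (((l + 1 : ℕ) : ℤ) + (u : ℤ) - 1))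
        * qbinom qq ((l + 1 : ℕ) : ℤ) (t : ℤ) * P (w + t))
    = (∑ t ∈ range (l + 1), qq ^ (-(t : ℤ) * ((l : ℤ) + (u : ℤ) - 1)) * qbinom qq (l : ℤ) (t : ℤ)
        * P (w + t))
      + qq ^ (-(u : ℤ) - 2 * l) *
      ∑ t ∈ range (l + 1), qq ^ (-(t : ℤ) * ((l : ℤ) + (u : ℤ) - 1)) * qbinom qq (l : ℤ) (t : ℤ)
        * P (w + 1 + t) := by
  have h0 := qq_ne
  have h1 : (∑ t ∈ range (l + 1), qq ^ (-(t : ℤ) * ((l : ℤ) + (u : ℤ) - 1))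
        * qbinom qq (l : ℤ) (t : ℤ) * P (w + t))
      = ∑ t ∈ range (l + 1 + 1), qq ^ (-(t : ℤ) * ((l : ℤ) + (u : ℤ) - 1))
        * qbinom qq (l : ℤ) (t : ℤ) * P (w + t) := by
    rw [sum_range_succ _ (l + 1)]
    push_cast
    rw [qbinom_top]; simp
  rw [h1, sum_range_succ' _ (l + 1), sum_range_succ' _ (l + 1), add_right_comm, mul_sum,
    ← sum_add_distrib]
  congr 1
  · refine sum_congr rfl fun t _ => ?_
    push_cast
    rw [qbinom_pascal]
    have e : w + 1 + (t : ℤ) = w + (t + 1) := by ring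
    rw [e, ← mul_assoc, ← mul_assoc, ← add_mul, mul_add, ← mul_assoc, ← mul_assoc,
      ← zpow_add₀ h0, ← zpow_add₀ h0, ← zpow_add₀ h0]
    congr 2
    · congr 2
      ring
    · congr 2
      ring
  · simp [qbinom_zero]

/-- Recursion in `ℓ`:
`G(w,u,ℓ+1;p0,p1,p2) = q^u G(w,u,ℓ;p0,p1,p2) − q^{u−2ℓ} G(w+1,u,ℓ;p0,p1,p2)`. -/
theorem G_rec_ell (w p0 p1 p2 : ℤ) (u ℓ : ℕ) :
    G w u (ℓ + 1) p0 p1 p2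
      = qq ^ (u : ℤ) * G w u ℓ p0 p1 p2
        - qq ^ ((u : ℤ) - 2 * (ℓ : ℤ)) * G (w + 1) u ℓ p0 p1 p2 := by
  have h0 := qq_ne
  rw [G_eq, G_eq, G_eq, S_rec]
  rw [zpow_add₀ (by norm_num : (-1 : F) ≠ 0) w 1]
  have a1 : qq ^ ((u : ℤ) ^ 2 - w * (u : ℤ) + ((ℓ + 1 : ℕ) : ℤ) * (u : ℤ))
      = qq ^ (u : ℤ) * qq ^ ((u : ℤ) ^ 2 - w * (u : ℤ) + (ℓ : ℤ) * (u : ℤ)) := by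
    rw [← zpow_add₀ h0]; congr 1; push_cast; ring
  have a2 : qq ^ ((u : ℤ) - 2 * (ℓ : ℤ))
        * qq ^ ((u : ℤ) ^ 2 - (w + 1) * (u : ℤ) + (ℓ : ℤ) * (u : ℤ))
      = qq ^ ((u : ℤ) ^ 2 - w * (u : ℤ) + ((ℓ + 1 : ℕ) : ℤ) * (u : ℤ))
        * qq ^ (-(u : ℤ) - 2 * ℓ) := by
    rw [← zpow_add₀ h0, ← zpow_add₀ h0]; congr 1; push_cast; ring
  rw [mul_add, zpow_one]
  generalize (∑ t ∈ range (ℓ + 1), qq ^ (-(t : ℤ) * ((ℓ : ℤ) + (u : ℤ) - 1))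
    * qbinom qq (ℓ : ℤ) (t : ℤ) * Phi u p0 p1 p2 (w + 1 + t)) = B
  generalize (∑ t ∈ range (ℓ + 1), qq ^ (-(t : ℤ) * ((ℓ : ℤ) + (u : ℤ) - 1))
    * qbinom qq (ℓ : ℤ) (t : ℤ) * Phi u p0 p1 p2 (w + t)) = A
  linear_combination (-1 : F) ^ w * A * a1 - (-1 : F) ^ w * B * a2

end
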